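/- Let α₀, β₀, m₁, m₂, m₃, m₄ ∈ ℝ with α₀ ≠ 0, and let B = blockdiag(B(α₀,β₀), B(α₀,β₀)) (a 6×6 matrix). Let ℒ be the 6×6 real matrix with rows (1,0,0,0,0,0), (m₁,0,0,m₂,1,0), ((m₁²+1)/2, 1, 1, m₃, m₁, 0), (0,0,0,1,0,0), (1,1,0,m₄,0,0), (m₄−m₃+m₁m₂, m₄, 0, (m₂²+m₄²)/2, m₂, 1). Then ℒ is invertible and ℒᵀ B ℒ = B; equivalently, ℒ is a (B, B)-unitary operator: it is bijective and ⟨Bℒx, ℒy⟩ = ⟨Bx, y⟩ for all x, y ∈ ℂ⁶. -/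

import Mathlib

open Matrix

/-- The standard Hermitian inner product on `ℂ^n`, conjugate-linear in the
second argument. -/
noncomputable def herm {n : Type*} [Fintype n] (x y : n → ℂ) : ℂ :=
  ∑ i, x i * (starRingEnd ℂ) (y i)

/-- `blockdiag(B(α,β), B(α,β))` as a 6×6 matrix over `ℂ`, where `B(α,β)` has rows
`(β,0,α)`, `(0,−α,0)`, `(α,0,0)`. -/
noncomputable def B6 (a b : ℝ) : Matrix (Fin 6) (Fin 6) ℂ :=
  !![(b : ℂ), 0, (a : ℂ), 0, 0, 0;
     0, -(a : ℂ), 0, 0, 0, 0;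
     (a : ℂ), 0, 0, 0, 0, 0;
     0, 0, 0, (b : ℂ), 0, (a : ℂ);
     0, 0, 0, 0, -(a : ℂ), 0;
     0, 0, 0, (a : ℂ), 0, 0]

/-! Group the six boundary values as `(p, q, r)`, where `p`, `q`, `r ∈ ℂ²` list the values, the
first and the second derivatives over the two edges. The Krein form becomes
`β |p|² + 2 α Re ⟨p, r⟩ - α |q|²` and `ℒ` becomes `(p, q, r) ↦ (p, m p + s q, c p + m⋆ s q + r)`,
where `s` swaps the edges and `m` has rows `(m₁, m₂)`, `(1, m₄)`. Since `s` is an isometry,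
`|m p + s q|²` exceeds `|q|²` by `|m p|² + 2 Re ⟨p, m⋆ s q⟩`, and the new third component
compensates for this exactly when `c + c⋆ = m⋆ m`. This fixes the Hermitian part of `c`
and leaves its skew part free, hence the parameter `m₃`. -/

theorem isUnit_of_mul_mul_eq {M : Type*} [Monoid M] [IsDedekindFiniteMonoid M] {x b y : M}
    (hb : IsUnit b) (h : x * b * y = b) : IsUnit y :=
  isUnit_of_mul_isUnit_right (h.symm ▸ hb)

theorem herm_mulVec_right {m n : Type*} [Fintype m] [Fintype n] (L : Matrix m n ℂ)
    (x : m → ℂ) (y : n → ℂ) : herm x (L *ᵥ y) = herm (Lᴴ *ᵥ x) y := by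
  change x ⬝ᵥ star (L *ᵥ y) = (Lᴴ *ᵥ x) ⬝ᵥ star y
  rw [star_mulVec, dotProduct_comm, ← dotProduct_mulVec, dotProduct_comm]

theorem herm_mulVec_mulVec_eq {n : Type*} [Fintype n] {B L : Matrix n n ℂ}
    (hL : Lᴴ * B * L = B) (x y : n → ℂ) :
    herm (B *ᵥ (L *ᵥ x)) (L *ᵥ y) = herm (B *ᵥ x) y := by
  rw [herm_mulVec_right, mulVec_mulVec, mulVec_mulVec, hL]

section AiryForm

variable {A : Type*} [Ring A]

/-- The Krein form of the Airy operator on the vectors `(p, q, r)` of values, first and second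
derivatives at a boundary point. Taking for `A` a ring of `n × n` matrices treats `n` edges at
once. -/
def airyForm (a b : A) : Matrix (Fin 3) (Fin 3) A :=
  !![b, 0, a; 0, -a, 0; a, 0, 0]

/-- The transformation `(p, q, r) ↦ (p, m p + s q, c p + m⋆ s q + r)` of boundary values. The
coefficient `m⋆ s` is forced by invariance of `airyForm`. -/
def airyShear [StarRing A] (m s c : A) : Matrix (Fin 3) (Fin 3) A :=
  !![1, 0, 0; m, s, 0; c, star m * s, 1]

theorem isUnit_airyForm {a : A} (ha : IsUnit a) (b : A) : IsUnit (airyForm a b) := by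
  obtain ⟨u, rfl⟩ := ha
  refine isUnit_iff_exists.mpr
    ⟨!![0, 0, ↑u⁻¹; 0, -↑u⁻¹, 0; ↑u⁻¹, 0, -(↑u⁻¹ * b * ↑u⁻¹)], ?_, ?_⟩ <;>
    simp [airyForm, one_fin_three, mul_assoc]

theorem conjTranspose_airyShear_mul_airyForm_mul [StarRing A] {a m s c : A}
    (ha : ∀ x, Commute a x) (hs : star s * s = 1) (hc : c + star c = star m * m) (b : A) :
    (airyShear m s c)ᴴ * airyForm a b * airyShear m s c = airyForm a b := by
  have pull_left (x y : A) : x * a * y = a * (x * y) := by rw [← (ha x).eq, mul_assoc]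
  have corner : b + star c * a + -(a * (star m * m)) + a * c = b := by
    rw [← (ha (star c)).eq, ← hc, mul_add]
    abel
  ext i j
  fin_cases i <;> fin_cases j <;>
    simp [airyForm, airyShear, mul_apply, Fin.sum_univ_three, pull_left, hs, corner]

end AiryForm

section FlattenBlocks

variable {I J K R : Type*} [Fintype I] [Fintype J] [Fintype K] [NonUnitalNonAssocSemiring R]

/-- The block matrix `X`, whose entries are themselves matrices, read as a matrix of scalars; `e`
numbers the pairs of a block index and an index inside the block. -/
def flattenBlocks (e : I × J ≃ K) : Matrix I I (Matrix J J R) ≃+* Matrix K K R :=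
  (compRingEquiv I J R).trans (reindexRingEquiv R e)

theorem eq_flattenBlocks_iff {e : I × J ≃ K} {Y : Matrix K K R} {X : Matrix I I (Matrix J J R)} :
    Y = flattenBlocks e X ↔
      ∀ i j, Y.submatrix (fun k ↦ e (i, k)) (fun l ↦ e (j, l)) = X i j := by
  rw [← RingEquiv.symm_apply_eq, ← Matrix.ext_iff]
  rfl

theorem conjTranspose_flattenBlocks [StarRing R] (e : I × J ≃ K)
    (X : Matrix I I (Matrix J J R)) : (flattenBlocks e X)ᴴ = flattenBlocks e Xᴴ :=
  rfl

end FlattenBlocks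

/-- The numbering of the boundary values used in `B6`: the order of the derivative comes first in
the pair, whereas `Fin 6` runs through all derivatives on one edge before the next edge. -/
def edgeMajor : Fin 3 × Fin 2 ≃ Fin 6 :=
  (Equiv.prodComm _ _).trans finProdFinEquiv

theorem edgeMajor_apply (p : Fin 3 × Fin 2) :
    edgeMajor p = ![![0, 3], ![1, 4], ![2, 5]] p.1 p.2 := by
  decide +revert

theorem B6_eq_flattenBlocks_airyForm (a b : ℝ) :
    B6 a b = flattenBlocks edgeMajor (airyForm (scalar _ (a : ℂ)) (scalar _ (b : ℂ))) := by
  refine eq_flattenBlocks_iff.mpr fun i j ↦ ?_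
  fin_cases i <;> fin_cases j <;> simp only [Fin.reduceFinMk, airyForm, of_apply, cons_val] <;>
    ext k l <;> fin_cases k <;> fin_cases l <;> simp [B6, edgeMajor_apply]

theorem isUnit_B6 {a : ℝ} (ha : a ≠ 0) (b : ℝ) : IsUnit (B6 a b) := by
  have ha' : IsUnit (a : ℂ) := (Complex.ofReal_ne_zero.mpr ha).isUnit
  rw [B6_eq_flattenBlocks_airyForm]
  exact (isUnit_airyForm (ha'.map (scalar _)) _).map (flattenBlocks edgeMajor)

theorem conjTranspose_flattenBlocks_airyShear_mul_B6_mul {m s c : Matrix (Fin 2) (Fin 2) ℂ}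
    (hs : sᴴ * s = 1) (hc : c + cᴴ = mᴴ * m) (a b : ℝ) :
    (flattenBlocks edgeMajor (airyShear m s c))ᴴ * B6 a b *
      flattenBlocks edgeMajor (airyShear m s c) = B6 a b := by
  rw [B6_eq_flattenBlocks_airyForm, conjTranspose_flattenBlocks, ← map_mul, ← map_mul,
    conjTranspose_airyShear_mul_airyForm_mul (scalar_commute _ (Commute.all _)) hs hc]

/-- The block of `ℒ` sending the values on the two edges to the first derivatives. -/
def slopeBlock (m1 m2 m4 : ℝ) : Matrix (Fin 2) (Fin 2) ℂ :=
  !![(m1 : ℂ), (m2 : ℂ); 1, (m4 : ℂ)]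

/-- The block of `ℒ` sending the values on the two edges to the second derivatives. -/
noncomputable def curvatureBlock (m1 m2 m3 m4 : ℝ) : Matrix (Fin 2) (Fin 2) ℂ :=
  !![((m1 : ℂ) ^ 2 + 1) / 2, (m3 : ℂ);
     (m4 : ℂ) - m3 + m1 * m2, ((m2 : ℂ) ^ 2 + (m4 : ℂ) ^ 2) / 2]

/-- The block of `ℒ` acting on first derivatives, which exchanges the two edges. -/
def edgeSwap : Matrix (Fin 2) (Fin 2) ℂ :=
  !![0, 1; 1, 0]

theorem conjTranspose_slopeBlock (m1 m2 m4 : ℝ) :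
    (slopeBlock m1 m2 m4)ᴴ = !![(m1 : ℂ), 1; (m2 : ℂ), (m4 : ℂ)] := by
  ext i j
  fin_cases i <;> fin_cases j <;> simp [slopeBlock]

theorem conjTranspose_edgeSwap_mul_self : edgeSwapᴴ * edgeSwap = 1 := by
  ext i j
  fin_cases i <;> fin_cases j <;> simp [edgeSwap, mul_apply]

theorem curvatureBlock_add_conjTranspose (m1 m2 m3 m4 : ℝ) :
    curvatureBlock m1 m2 m3 m4 + (curvatureBlock m1 m2 m3 m4)ᴴ =
      (slopeBlock m1 m2 m4)ᴴ * slopeBlock m1 m2 m4 := by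
  rw [conjTranspose_slopeBlock]
  ext i j
  fin_cases i <;> fin_cases j <;> simp [slopeBlock, curvatureBlock] <;> ring

/-- Example 4.10: a four-parameter family of `(B,B)`-unitary boundary operators for the
Airy operator on a looping-edge graph with two half-lines. -/
theorem example410_unitary (a b m1 m2 m3 m4 : ℝ) (ha : a ≠ 0)
    (ℒ : Matrix (Fin 6) (Fin 6) ℂ)
    (hℒ : ℒ = !![1, 0, 0, 0, 0, 0;
                 (m1 : ℂ), 0, 0, (m2 : ℂ), 1, 0;
                 ((m1 : ℂ) ^ 2 + 1) / 2, 1, 1, (m3 : ℂ), (m1 : ℂ), 0;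
                 0, 0, 0, 1, 0, 0;
                 1, 1, 0, (m4 : ℂ), 0, 0;
                 (m4 : ℂ) - (m3 : ℂ) + (m1 : ℂ) * (m2 : ℂ), (m4 : ℂ), 0,
                   ((m2 : ℂ) ^ 2 + (m4 : ℂ) ^ 2) / 2, (m2 : ℂ), 1]) :
    IsUnit ℒ ∧ ℒᵀ * B6 a b * ℒ = B6 a b ∧
      Function.Bijective ℒ.mulVec ∧
      ∀ x y : Fin 6 → ℂ,
        herm ((B6 a b).mulVec (ℒ.mulVec x)) (ℒ.mulVec y)
          = herm ((B6 a b).mulVec x) y := by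
  have hblocks : ℒ = flattenBlocks edgeMajor
      (airyShear (slopeBlock m1 m2 m4) edgeSwap (curvatureBlock m1 m2 m3 m4)) := by
    refine eq_flattenBlocks_iff.mpr fun i j ↦ ?_
    rw [airyShear, star_eq_conjTranspose, conjTranspose_slopeBlock]
    fin_cases i <;> fin_cases j <;> simp only [Fin.reduceFinMk, of_apply, cons_val] <;>
      ext k l <;> fin_cases k <;> fin_cases l <;>
      simp [hℒ, slopeBlock, edgeSwap, curvatureBlock, edgeMajor_apply]
  have hreal : ℒᴴ = ℒᵀ := by
    rw [hℒ]
    ext i j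
    fin_cases i <;> fin_cases j <;> simp
  have hunitary : ℒᴴ * B6 a b * ℒ = B6 a b :=
    hblocks ▸ conjTranspose_flattenBlocks_airyShear_mul_B6_mul conjTranspose_edgeSwap_mul_self
      (curvatureBlock_add_conjTranspose m1 m2 m3 m4) a b
  have hunit : IsUnit ℒ := isUnit_of_mul_mul_eq (isUnit_B6 ha b) hunitary
  exact ⟨hunit, hreal ▸ hunitary,
    ⟨mulVec_injective_iff_isUnit.mpr hunit, mulVec_surjective_iff_isUnit.mpr hunit⟩,
    herm_mulVec_mulVec_eq hunitary⟩
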